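/- Second representation of the Weyl solution (equation (12)): Let λ ∈ ℂ with Δ₁(λ) ≠ 0 and ω(λ) ≠ 0. Then for all x ∈ [0,T]: Φ(x,λ) = (θ(x,λ) + (Δ₂(λ)/Δ₁(λ)) φ(x,λ)) / ω(λ), where φ(·,λ) := U₁(X₁(·,λ))X₂(·,λ) − U₁(X₂(·,λ))X₁(·,λ) and θ(·,λ) := U₂(X₂(·,λ))X₁(·,λ) − U₂(X₁(·,λ))X₂(·,λ). -/

import Mathlib

/-!
Two solutions of the Dirac system have constant Wronskian, because the coefficient matrix of
`y' = -B (λ - Ω) y` has trace zero. Cramer's rule in `ℂ²` then expands every solution as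
`y = y₁(0) X₁ + y₂(0) X₂`, with no Lipschitz or Grönwall estimate, even for integrable `p` and `q`.
Applying `U₁` and `U₂` to this expansion and eliminating the initial values gives
`ω y = U₁(y) θ + U₂(y) φ`. For `y = Φ` we have `U₁(Φ) = 1`, and the first component of the identity
at `T` reads `0 = -Δ₂ + U₂(Φ) Δ₁`, so the Weyl function `U₂(Φ)` equals `Δ₂ / Δ₁`.
-/

open MeasureTheory Set Filter

noncomputable section

/-- A function `f : ℝ → ℂ` is absolutely continuous on `[0, T]`:
it is the indefinite integral of an integrable function. -/
def AbsContOn (f : ℝ → ℂ) (T : ℝ) : Prop :=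
  ∃ g : ℝ → ℂ, IntervalIntegrable g volume 0 T ∧
    ∀ x ∈ Icc (0 : ℝ) T, f x = f 0 + ∫ t in (0 : ℝ)..x, g t

/-- `y : ℝ → ℂ × ℂ` is a solution of the Dirac system `B y' + Ω y = λ y` on `[0, T]`,
where `B = ![![0,1],![-1,0]]` and `Ω = ![![p,q],![q,-p]]`:  `y` is continuous on `[0,T]`
and satisfies the equivalent system of integral equations coming from
`y₁' = q y₁ - (p + λ) y₂`, `y₂' = (λ - p) y₁ - q y₂`
(this encodes: `y` is absolutely continuous and the ODE holds a.e.). -/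
def IsDiracSol (p q : ℝ → ℂ) (T : ℝ) (lam : ℂ) (y : ℝ → ℂ × ℂ) : Prop :=
  ContinuousOn y (Icc (0 : ℝ) T) ∧
    ∀ x ∈ Icc (0 : ℝ) T,
      ((y x).1 = (y 0).1 + ∫ t in (0 : ℝ)..x, (q t * (y t).1 - (p t + lam) * (y t).2)) ∧
      ((y x).2 = (y 0).2 + ∫ t in (0 : ℝ)..x, ((lam - p t) * (y t).1 - q t * (y t).2))

/-- A nonlocal linear form `U(y) = ∫_{[0,T]} y₁ dμ₁ + ∫_{[0,T]} y₂ dμ₂`, where the complex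
Borel measures `μᵢ` are encoded (via Radon–Nikodym) as integrable complex densities `wᵢ`
with respect to finite positive measures. -/
structure NonlocalForm (T : ℝ) where
  μ₁ : Measure ℝ
  μ₂ : Measure ℝ
  finite₁ : IsFiniteMeasure μ₁
  finite₂ : IsFiniteMeasure μ₂
  w₁ : ℝ → ℂ
  w₂ : ℝ → ℂ
  int₁ : Integrable w₁ μ₁
  int₂ : Integrable w₂ μ₂

namespace NonlocalForm

variable {T : ℝ}

/-- The value `U(y)` of the nonlocal form on a function `y`. -/
def app (U : NonlocalForm T) (y : ℝ → ℂ × ℂ) : ℂ :=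
  (∫ t in Icc (0 : ℝ) T, U.w₁ t * (y t).1 ∂U.μ₁) +
    ∫ t in Icc (0 : ℝ) T, U.w₂ t * (y t).2 ∂U.μ₂

/-- `h₁ = μ₁({0})`, the mass of the first complex measure at `0`. -/
def h₁ (U : NonlocalForm T) : ℂ := U.w₁ 0 * ((U.μ₁ {0}).toReal : ℂ)

/-- `h₂ = μ₂({0})`, the mass of the second complex measure at `0`. -/
def h₂ (U : NonlocalForm T) : ℂ := U.w₂ 0 * ((U.μ₂ {0}).toReal : ℂ)

end NonlocalForm

/-- A two-point (local) linear form `y ↦ c₁ y₁(t) + c₂ y₂(t)`. -/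
def locForm (c₁ c₂ : ℂ) (t : ℝ) (y : ℝ → ℂ × ℂ) : ℂ := c₁ * (y t).1 + c₂ * (y t).2

/-- `f` and `g` have the same order of zero at `z` (order possibly `0` or `∞`):
for every `n`, the first `n` derivatives of `f` vanish at `z` iff
the first `n` derivatives of `g` do. -/
def ZeroOrderEq (f g : ℂ → ℂ) (z : ℂ) : Prop :=
  ∀ n : ℕ, (∀ k < n, iteratedDeriv k f z = 0) ↔ (∀ k < n, iteratedDeriv k g z = 0)

/-- The filter of `λ → ∞` within the sector `arg λ ∈ [δ, π - δ]`. -/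
def sectorFilter (δ : ℝ) : Filter ℂ :=
  Filter.comap (fun lam : ℂ => ‖lam‖) Filter.atTop ⊓
    Filter.principal {lam : ℂ | Complex.arg lam ∈ Icc δ (Real.pi - δ)}

section Primitive

variable {E : Type*} [NormedAddCommGroup E] [NormedSpace ℝ E] {f g : ℝ → E} {a b : ℝ}

lemma absolutelyContinuousOnInterval_of_dist_le {X Y : Type*} [PseudoMetricSpace X]
    [PseudoMetricSpace Y] {u : ℝ → X} {v : ℝ → Y} (hv : AbsolutelyContinuousOnInterval v a b)
    (h : ∀ x ∈ uIcc a b, ∀ y ∈ uIcc a b, dist (u x) (u y) ≤ dist (v x) (v y)) :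
    AbsolutelyContinuousOnInterval u a b := by
  refine squeeze_zero' (.of_forall fun _ => Finset.sum_nonneg fun _ _ => dist_nonneg) ?_ hv
  filter_upwards [mem_inf_of_right (mem_principal_self _)] with I hI
  exact Finset.sum_le_sum fun i hi => h _ (hI.1 i hi).1 _ (hI.1 i hi).2

lemma absolutelyContinuousOnInterval_of_eq_add_integral (hg : IntervalIntegrable g volume a b)
    (hf : ∀ x ∈ uIcc a b, f x = f a + ∫ t in a..x, g t) :
    AbsolutelyContinuousOnInterval f a b := by
  refine absolutelyContinuousOnInterval_of_dist_le
    (hg.norm.absolutelyContinuousOnInterval_intervalIntegral left_mem_uIcc) fun x hx y hy => ?_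
  have hgx : IntervalIntegrable g volume a x := hg.mono_set (uIcc_subset_uIcc_left hx)
  have hgy : IntervalIntegrable g volume a y := hg.mono_set (uIcc_subset_uIcc_left hy)
  rw [hf x hx, hf y hy, dist_add_left, dist_eq_norm, Real.dist_eq,
    intervalIntegral.integral_interval_sub_left hgx hgy,
    intervalIntegral.integral_interval_sub_left hgx.norm hgy.norm]
  exact intervalIntegral.norm_integral_le_abs_integral_norm

lemma ae_hasDerivAt_of_eq_add_integral [CompleteSpace E] (hg : IntervalIntegrable g volume a b)
    (hf : ∀ x ∈ uIcc a b, f x = f a + ∫ t in a..x, g t) :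
    ∀ᵐ x, x ∈ uIcc a b → HasDerivAt f (g x) x := by
  have hne (c : ℝ) : ∀ᵐ x : ℝ, x ≠ c := by simp [ae_iff]
  filter_upwards [hg.ae_hasDerivAt_integral, hne a, hne b] with x hderiv hxa hxb hx
  have hnhds : uIcc a b ∈ nhds x := by
    rcases le_total a b with hab | hab
    · rw [uIcc_of_le hab] at hx ⊢
      exact Icc_mem_nhds (hx.1.lt_of_ne' hxa) (hx.2.lt_of_ne hxb)
    · rw [uIcc_of_ge hab] at hx ⊢
      exact Icc_mem_nhds (hx.1.lt_of_ne' hxb) (hx.2.lt_of_ne hxa)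
  exact ((hderiv hx a left_mem_uIcc).const_add (f a)).congr_of_eventuallyEq
    (mem_of_superset hnhds hf)

end Primitive

lemma AbsContOn.intervalIntegrable {f : ℝ → ℂ} {T : ℝ} (hT : 0 ≤ T) (hf : AbsContOn f T) :
    IntervalIntegrable f volume 0 T := by
  obtain ⟨g, hg, hfg⟩ := hf
  rw [← uIcc_of_le hT] at hfg
  exact (absolutelyContinuousOnInterval_of_eq_add_integral hg hfg).continuousOn.intervalIntegrable

/-- The Wronskian `y₁ z₂ - y₂ z₁` of two `ℂ²`-valued functions; it is constant along pairs of
solutions of the Dirac system with the same spectral parameter. -/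
def diracWronskian (y z : ℝ → ℂ × ℂ) (x : ℝ) : ℂ := (y x).1 * (z x).2 - (y x).2 * (z x).1

lemma diracWronskian_smul_eq (y z w : ℝ → ℂ × ℂ) (x : ℝ) :
    diracWronskian y z x • w x = diracWronskian w z x • y x + diracWronskian y w x • z x := by
  ext <;> simp only [diracWronskian, Prod.fst_add, Prod.snd_add, Prod.smul_fst, Prod.smul_snd,
    smul_eq_mul] <;> ring

namespace IsDiracSol

variable {p q : ℝ → ℂ} {T : ℝ} {lam : ℂ} {y z : ℝ → ℂ × ℂ}

lemma intervalIntegrable_rhs (hT : 0 ≤ T) (hp : IntervalIntegrable p volume 0 T)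
    (hq : IntervalIntegrable q volume 0 T) (hy : IsDiracSol p q T lam y) :
    IntervalIntegrable (fun t => q t * (y t).1 - (p t + lam) * (y t).2) volume 0 T ∧
      IntervalIntegrable (fun t => (lam - p t) * (y t).1 - q t * (y t).2) volume 0 T := by
  have hcont : ContinuousOn y (uIcc 0 T) := uIcc_of_le hT ▸ hy.1
  have hlam : IntervalIntegrable (fun _ => lam) volume 0 T := intervalIntegrable_const
  exact ⟨(hq.mul_continuousOn hcont.fst).sub ((hp.add hlam).mul_continuousOn hcont.snd),
    ((hlam.sub hp).mul_continuousOn hcont.fst).sub (hq.mul_continuousOn hcont.snd)⟩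

lemma absolutelyContinuousOnInterval_fst_snd (hT : 0 ≤ T) (hp : IntervalIntegrable p volume 0 T)
    (hq : IntervalIntegrable q volume 0 T) (hy : IsDiracSol p q T lam y) :
    AbsolutelyContinuousOnInterval (fun t => (y t).1) 0 T ∧
      AbsolutelyContinuousOnInterval (fun t => (y t).2) 0 T := by
  obtain ⟨hint₁, hint₂⟩ := hy.intervalIntegrable_rhs hT hp hq
  have heq := hy.2
  rw [← uIcc_of_le hT] at heq
  exact ⟨absolutelyContinuousOnInterval_of_eq_add_integral hint₁ fun x hx => (heq x hx).1,
    absolutelyContinuousOnInterval_of_eq_add_integral hint₂ fun x hx => (heq x hx).2⟩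

lemma ae_hasDerivAt_fst_snd (hT : 0 ≤ T) (hp : IntervalIntegrable p volume 0 T)
    (hq : IntervalIntegrable q volume 0 T) (hy : IsDiracSol p q T lam y) :
    ∀ᵐ x, x ∈ uIcc 0 T →
      HasDerivAt (fun t => (y t).1) (q x * (y x).1 - (p x + lam) * (y x).2) x ∧
        HasDerivAt (fun t => (y t).2) ((lam - p x) * (y x).1 - q x * (y x).2) x := by
  obtain ⟨hint₁, hint₂⟩ := hy.intervalIntegrable_rhs hT hp hq
  have heq := hy.2
  rw [← uIcc_of_le hT] at heq
  filter_upwards [ae_hasDerivAt_of_eq_add_integral hint₁ fun x hx => (heq x hx).1,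
    ae_hasDerivAt_of_eq_add_integral hint₂ fun x hx => (heq x hx).2] with x h₁ h₂ hx
  exact ⟨h₁ hx, h₂ hx⟩

lemma ae_hasDerivAt_diracWronskian_zero (hT : 0 ≤ T) (hp : IntervalIntegrable p volume 0 T)
    (hq : IntervalIntegrable q volume 0 T) (hy : IsDiracSol p q T lam y)
    (hz : IsDiracSol p q T lam z) :
    ∀ᵐ x, x ∈ uIcc 0 T → HasDerivAt (diracWronskian y z) 0 x := by
  filter_upwards [hy.ae_hasDerivAt_fst_snd hT hp hq, hz.ae_hasDerivAt_fst_snd hT hp hq]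
    with x hy' hz' hx
  convert! ((hy' hx).1.mul (hz' hx).2).sub ((hy' hx).2.mul (hz' hx).1) using 1
  ring

theorem diracWronskian_eq_apply_zero (hp : IntervalIntegrable p volume 0 T)
    (hq : IntervalIntegrable q volume 0 T) (hy : IsDiracSol p q T lam y)
    (hz : IsDiracSol p q T lam z) {x : ℝ} (hx : x ∈ Icc 0 T) :
    diracWronskian y z x = diracWronskian y z 0 := by
  have hT : 0 ≤ T := hx.1.trans hx.2
  obtain ⟨hy₁, hy₂⟩ := hy.absolutelyContinuousOnInterval_fst_snd hT hp hq
  obtain ⟨hz₁, hz₂⟩ := hz.absolutelyContinuousOnInterval_fst_snd hT hp hq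
  have hac : AbsolutelyContinuousOnInterval (diracWronskian y z) 0 T :=
    (hy₁.smul hz₂).sub (hy₂.smul hz₁)
  obtain ⟨C, hC⟩ :=
    hac.const_of_ae_hasDerivAt_zero (hy.ae_hasDerivAt_diracWronskian_zero hT hp hq hz)
  rw [hC x (uIcc_of_le hT ▸ hx), hC 0 left_mem_uIcc]

theorem eq_smul_add_smul {X₁ X₂ : ℝ → ℂ × ℂ} (hp : IntervalIntegrable p volume 0 T)
    (hq : IntervalIntegrable q volume 0 T) (hX₁ : IsDiracSol p q T lam X₁ ∧ X₁ 0 = (1, 0))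
    (hX₂ : IsDiracSol p q T lam X₂ ∧ X₂ 0 = (0, 1)) (hy : IsDiracSol p q T lam y) {x : ℝ}
    (hx : x ∈ Icc 0 T) :
    y x = (y 0).1 • X₁ x + (y 0).2 • X₂ x := by
  have hW : diracWronskian X₁ X₂ x = 1 := by
    rw [hX₁.1.diracWronskian_eq_apply_zero hp hq hX₂.1 hx]
    simp [diracWronskian, hX₁.2, hX₂.2]
  have hW₁ : diracWronskian y X₂ x = (y 0).1 := by
    rw [hy.diracWronskian_eq_apply_zero hp hq hX₂.1 hx]
    simp [diracWronskian, hX₂.2]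
  have hW₂ : diracWronskian X₁ y x = (y 0).2 := by
    rw [hX₁.1.diracWronskian_eq_apply_zero hp hq hy hx]
    simp [diracWronskian, hX₁.2]
  simpa only [hW, hW₁, hW₂, one_smul] using diracWronskian_smul_eq X₁ X₂ y x

end IsDiracSol

namespace NonlocalForm

variable {T : ℝ} {y z : ℝ → ℂ × ℂ}

lemma app_congr (U : NonlocalForm T) (h : EqOn y z (Icc 0 T)) : U.app y = U.app z := by
  refine congrArg₂ (· + ·) ?_ ?_ <;>
    exact setIntegral_congr_fun measurableSet_Icc fun t ht => by simp only [h ht]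

lemma app_const_smul (U : NonlocalForm T) (c : ℂ) (y : ℝ → ℂ × ℂ) :
    U.app (c • y) = c * U.app y := by
  simp only [app, Pi.smul_apply, Prod.smul_fst, Prod.smul_snd, smul_eq_mul, mul_left_comm _ c,
    integral_const_mul, mul_add]

lemma app_add (U : NonlocalForm T) (hy : ContinuousOn y (Icc 0 T))
    (hz : ContinuousOn z (Icc 0 T)) :
    U.app (y + z) = U.app y + U.app z := by
  have hint {μ : Measure ℝ} {w f : ℝ → ℂ} (hw : Integrable w μ) (hf : ContinuousOn f (Icc 0 T)) :
      IntegrableOn (fun t => w t * f t) (Icc 0 T) μ :=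
    hw.integrableOn.mul_continuousOn hf isCompact_Icc
  simp only [app, Pi.add_apply, Prod.fst_add, Prod.snd_add, mul_add]
  rw [integral_add (hint U.int₁ hy.fst) (hint U.int₁ hz.fst),
    integral_add (hint U.int₂ hy.snd) (hint U.int₂ hz.snd)]
  ring

end NonlocalForm

namespace IsDiracSol

variable {p q : ℝ → ℂ} {T : ℝ} {lam : ℂ} {y X₁ X₂ : ℝ → ℂ × ℂ}

lemma app_eq_mul_add_mul (hp : IntervalIntegrable p volume 0 T)
    (hq : IntervalIntegrable q volume 0 T) (hX₁ : IsDiracSol p q T lam X₁ ∧ X₁ 0 = (1, 0))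
    (hX₂ : IsDiracSol p q T lam X₂ ∧ X₂ 0 = (0, 1)) (hy : IsDiracSol p q T lam y)
    (U : NonlocalForm T) :
    U.app y = (y 0).1 * U.app X₁ + (y 0).2 * U.app X₂ := by
  have hcomb : EqOn y ((y 0).1 • X₁ + (y 0).2 • X₂) (Icc 0 T) :=
    fun _ hx => hy.eq_smul_add_smul hp hq hX₁ hX₂ hx
  rw [U.app_congr hcomb,
    U.app_add (hX₁.1.1.const_smul _) (hX₂.1.1.const_smul _), U.app_const_smul, U.app_const_smul]

theorem app_det_smul_eq (hp : IntervalIntegrable p volume 0 T)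
    (hq : IntervalIntegrable q volume 0 T) (hX₁ : IsDiracSol p q T lam X₁ ∧ X₁ 0 = (1, 0))
    (hX₂ : IsDiracSol p q T lam X₂ ∧ X₂ 0 = (0, 1)) (hy : IsDiracSol p q T lam y)
    (U₁ U₂ : NonlocalForm T) {x : ℝ} (hx : x ∈ Icc 0 T) :
    (U₁.app X₁ * U₂.app X₂ - U₁.app X₂ * U₂.app X₁) • y x =
      U₁.app y • (U₂.app X₂ • X₁ x - U₂.app X₁ • X₂ x) +
        U₂.app y • (U₁.app X₁ • X₂ x - U₁.app X₂ • X₁ x) := by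
  rw [hy.app_eq_mul_add_mul hp hq hX₁ hX₂ U₁, hy.app_eq_mul_add_mul hp hq hX₁ hX₂ U₂,
    hy.eq_smul_add_smul hp hq hX₁ hX₂ hx]
  module

end IsDiracSol

theorem statement11_general
    {T : ℝ} {p q : ℝ → ℂ} (hp : IntervalIntegrable p volume 0 T)
    (hq : IntervalIntegrable q volume 0 T) {U₁ U₂ : NonlocalForm T} {lam : ℂ}
    {X₁ X₂ : ℝ → ℂ × ℂ}
    (hX₁ : IsDiracSol p q T lam X₁ ∧ X₁ 0 = (1, 0))
    (hX₂ : IsDiracSol p q T lam X₂ ∧ X₂ 0 = (0, 1))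
    {φ θ : ℝ → ℂ × ℂ}
    (hφ : ∀ x, φ x = U₁.app X₁ • X₂ x - U₁.app X₂ • X₁ x)
    (hθ : ∀ x, θ x = U₂.app X₂ • X₁ x - U₂.app X₁ • X₂ x)
    {ω Δ₁ Δ₂ : ℂ}
    (hωdef : ω = U₁.app X₁ * U₂.app X₂ - U₁.app X₂ * U₂.app X₁)
    (hΔ₁def : Δ₁ = U₁.app X₁ * (X₂ T).1 - U₁.app X₂ * (X₁ T).1)
    (hΔ₂def : Δ₂ = U₂.app X₁ * (X₂ T).1 - U₂.app X₂ * (X₁ T).1)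
    (hΔ₁ : Δ₁ ≠ 0) (hω : ω ≠ 0) {Φ : ℝ → ℂ × ℂ} (hΦ : IsDiracSol p q T lam Φ)
    (hU₁Φ : U₁.app Φ = 1) (hΦT : (Φ T).1 = 0) {x : ℝ} (hx : x ∈ Icc 0 T) :
    Φ x = ω⁻¹ • (θ x + (Δ₂ / Δ₁) • φ x) := by
  have hexpand (t : ℝ) (ht : t ∈ Icc 0 T) : ω • Φ t = θ t + U₂.app Φ • φ t := by
    rw [hωdef, hΦ.app_det_smul_eq hp hq hX₁ hX₂ U₁ U₂ ht, hU₁Φ, one_smul, hθ, hφ]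
  have hθT : (θ T).1 = -Δ₂ := by simp [hθ, hΔ₂def]
  have hφT : (φ T).1 = Δ₁ := by simp [hφ, hΔ₁def]
  have hboundary : 0 = -Δ₂ + U₂.app Φ * Δ₁ := by
    simpa [hΦT, hθT, hφT] using
      congrArg Prod.fst (hexpand T (right_mem_Icc.2 (hx.1.trans hx.2)))
  have hweyl : U₂.app Φ = Δ₂ / Δ₁ := by
    rw [eq_div_iff hΔ₁]
    linear_combination -hboundary
  rw [eq_inv_smul_iff₀ hω, hexpand x hx, hweyl]

/-- **Equation (12)**: if `Δ₁(λ) ≠ 0` and `ω(λ) ≠ 0`, then on `[0,T]`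
`Φ(x,λ) = (θ(x,λ) + (Δ₂(λ)/Δ₁(λ)) φ(x,λ)) / ω(λ)`, where
`φ = U₁(X₁) X₂ - U₁(X₂) X₁` and `θ = U₂(X₂) X₁ - U₂(X₁) X₂`. -/
theorem statement11
    (T : ℝ) (hT : 0 < T)
    (p q : ℝ → ℂ) (hp : AbsContOn p T) (hq : AbsContOn q T)
    (U₁ U₂ : NonlocalForm T)
    (lam : ℂ)
    (X₁ X₂ : ℝ → ℂ × ℂ)
    (hX₁ : IsDiracSol p q T lam X₁ ∧ X₁ 0 = (1, 0))
    (hX₂ : IsDiracSol p q T lam X₂ ∧ X₂ 0 = (0, 1))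
    (φ θ : ℝ → ℂ × ℂ)
    (hφ : ∀ x, φ x = U₁.app X₁ • X₂ x - U₁.app X₂ • X₁ x)
    (hθ : ∀ x, θ x = U₂.app X₂ • X₁ x - U₂.app X₁ • X₂ x)
    (ω Δ₁ Δ₂ : ℂ)
    (hωdef : ω = U₁.app X₁ * U₂.app X₂ - U₁.app X₂ * U₂.app X₁)
    (hΔ₁def : Δ₁ = U₁.app X₁ * (X₂ T).1 - U₁.app X₂ * (X₁ T).1)
    (hΔ₂def : Δ₂ = U₂.app X₁ * (X₂ T).1 - U₂.app X₂ * (X₁ T).1)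
    (hΔ₁ : Δ₁ ≠ 0) (hω : ω ≠ 0) :
    ∀ Φ : ℝ → ℂ × ℂ, IsDiracSol p q T lam Φ → U₁.app Φ = 1 → (Φ T).1 = 0 →
      ∀ x ∈ Icc (0 : ℝ) T, Φ x = ω⁻¹ • (θ x + (Δ₂ / Δ₁) • φ x) :=
  fun _ hΦ hU₁Φ hΦT _ hx =>
    statement11_general (hp.intervalIntegrable hT.le) (hq.intervalIntegrable hT.le) hX₁ hX₂ hφ hθ
      hωdef hΔ₁def hΔ₂def hΔ₁ hω hΦ hU₁Φ hΦT hx
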